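/- Let 𝔤 be a finite-dimensional real Lie algebra of dimension ≥ 4 which contains an abelian subalgebra of codimension 1. Then 𝔤 admits no contact form and no exact symplectic form. -/

import Mathlib

/-!
For a subspace `S`, say that a form has degree at most `p` in `S` if it vanishes once more than `p`
of its arguments lie in `S`. These degrees add under the wedge product. If `η` vanishes on `⁅S, S⁆`,
then `∂η` has degree at most `1` in `S`, hence `(∂η)ⁿ` at most `n` and `(∂η)ⁿ ∧ η` at most `n + 1`.
A basis of `L` extending one of `S` has only `codim S` vectors outside `S`, so a form of arity
greater than `p + codim S` and degree at most `p` in `S` is zero. A nonzero `(∂η)ⁿ ∧ η` of top arity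
therefore forces `dim S ≤ n + 1`, and a nonzero `(∂α)ⁿ` of top arity forces `dim S ≤ n`.
-/

set_option maxHeartbeats 1000000
set_option maxRecDepth 8000

noncomputable section

namespace ContactLie

section Core

variable {L : Type*} [LieRing L] [LieAlgebra ℝ L]

/-- The Chevalley–Eilenberg differential of a linear form: `∂η (x, y) = -η ⁅x, y⁆`,
as an alternating 2-form. -/
def dee (η : Module.Dual ℝ L) : L [⋀^Fin 2]→ₗ[ℝ] ℝ where
  toFun v := -η ⁅v 0, v 1⁆
  map_update_add' m i x y := by
    fin_cases i <;>
      simp only [Function.update, Fin.forall_fin_two, add_lie, lie_add, map_add, neg_add] <;>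
      split <;> simp_all <;> ring
  map_update_smul' m i c x := by
    fin_cases i <;>
      simp [Function.update, Fin.forall_fin_two, smul_lie, lie_smul, map_smul]
  map_eq_zero_of_eq' v i j hv hij := by
    have h01 : v 0 = v 1 := by
      fin_cases i <;> fin_cases j <;> simp_all
    show -η ⁅v 0, v 1⁆ = 0
    rw [h01, lie_self, map_zero, neg_zero]

/-- A linear form viewed as an alternating 1-form. -/
def oneForm (η : Module.Dual ℝ L) : L [⋀^Fin 1]→ₗ[ℝ] ℝ :=
  AlternatingMap.ofSubsingleton ℝ L ℝ 0 η

/-- The wedge product of real-valued alternating forms. -/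
def wedge {a b : ℕ} (f : L [⋀^Fin a]→ₗ[ℝ] ℝ) (g : L [⋀^Fin b]→ₗ[ℝ] ℝ) :
    L [⋀^Fin (a + b)]→ₗ[ℝ] ℝ :=
  AlternatingMap.domDomCongr finSumFinEquiv
    ((TensorProduct.lid ℝ ℝ).toLinearMap.compAlternatingMap (f.domCoprod g))

/-- The `n`-th wedge power of an alternating 2-form. -/
def pow2 (ω : L [⋀^Fin 2]→ₗ[ℝ] ℝ) : (n : ℕ) → L [⋀^Fin (2 * n)]→ₗ[ℝ] ℝ
  | 0 => AlternatingMap.constOfIsEmpty ℝ L (Fin 0) 1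
  | n + 1 => wedge (pow2 ω n) ω

/-- `η` is a contact form on the Lie algebra `L` of dimension `2 n + 1`:
the alternating `(2 n + 1)`-form `(∂η)ⁿ ∧ η` is nonzero. -/
def IsContact (n : ℕ) (η : Module.Dual ℝ L) : Prop :=
  Module.finrank ℝ L = 2 * n + 1 ∧ wedge (pow2 (dee η) n) (oneForm η) ≠ 0

/-- `α` is an exact symplectic form on the Lie algebra `L` of dimension `2 n`:
the alternating `2 n`-form `(∂α)ⁿ` is nonzero, i.e. `∂α` is nondegenerate. -/
def IsExactSymplectic (n : ℕ) (α : Module.Dual ℝ L) : Prop :=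
  Module.finrank ℝ L = 2 * n ∧ pow2 (dee α) n ≠ 0

end Core

lemma ncard_preimage_inl_add_ncard_preimage_inr {α β : Type*} [Finite α] [Finite β]
    (s : Set (α ⊕ β)) : (Sum.inl ⁻¹' s).ncard + (Sum.inr ⁻¹' s).ncard = s.ncard := by
  have hdisj : Disjoint (Sum.inl '' (Sum.inl ⁻¹' s)) (Sum.inr '' (Sum.inr ⁻¹' s)) :=
    Set.disjoint_image_inl_image_inr
  rw [← Set.ncard_image_of_injective (Sum.inl ⁻¹' s) Sum.inl_injective,
    ← Set.ncard_image_of_injective (Sum.inr ⁻¹' s) Sum.inr_injective,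
    ← Set.ncard_union_eq hdisj, Set.image_preimage_inl_union_image_preimage_inr]

section Degree

variable {R M N ι : Type*} [CommSemiring R] [AddCommMonoid M] [Module R M]
  [AddCommMonoid N] [Module R N] {S : Submodule R M} {p : ℕ}

/-- An alternating form has degree at most `p` in the submodule `S` if it vanishes as soon as more
than `p` of its arguments lie in `S`. The positions of these arguments are counted by `Set.ncard`,
so the notion is meant for finite index types. -/
def DegreeLE (S : Submodule R M) (p : ℕ) (f : M [⋀^ι]→ₗ[R] N) : Prop :=
  ∀ v : ι → M, p < (v ⁻¹' S).ncard → f v = 0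

lemma degreeLE_of_card_le [Finite ι] (f : M [⋀^ι]→ₗ[R] N) (hp : Nat.card ι ≤ p) :
    DegreeLE S p f :=
  fun _ hv => absurd ((Set.ncard_le_card _).trans hp) hv.not_ge

lemma DegreeLE.compAlternatingMap {N' : Type*} [AddCommMonoid N'] [Module R N'] (g : N →ₗ[R] N')
    {f : M [⋀^ι]→ₗ[R] N} (hf : DegreeLE S p f) : DegreeLE S p (g.compAlternatingMap f) :=
  fun v hv => by rw [LinearMap.compAlternatingMap_apply, hf v hv, map_zero]

lemma DegreeLE.domDomCongr {κ : Type*} (e : ι ≃ κ) {f : M [⋀^ι]→ₗ[R] N} (hf : DegreeLE S p f) :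
    DegreeLE S p (f.domDomCongr e) := fun v hv =>
  hf (v ∘ e) <| by
    rwa [Set.preimage_comp, Set.ncard_preimage_of_injective_subset_range e.injective (by simp)]

end Degree

lemma DegreeLE.domCoprod {R M N₁ N₂ ι κ : Type*} [CommSemiring R] [AddCommMonoid M] [Module R M]
    [AddCommGroup N₁] [Module R N₁] [AddCommGroup N₂] [Module R N₂]
    [Fintype ι] [Fintype κ] [DecidableEq ι] [DecidableEq κ] {S : Submodule R M} {p q : ℕ}
    {f : M [⋀^ι]→ₗ[R] N₁} {g : M [⋀^κ]→ₗ[R] N₂}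
    (hf : DegreeLE S p f) (hg : DegreeLE S q g) : DegreeLE S (p + q) (f.domCoprod g) := by
  intro v hv
  rw [AlternatingMap.domCoprod_apply, _root_.sum_apply]
  refine Finset.sum_eq_zero fun σ _ => ?_
  induction σ using Quotient.inductionOn' with | _ σ
  rw [AlternatingMap.domCoprod.summand_mk'', _root_.smul_apply,
    MultilinearMap.domDomCongr_apply, MultilinearMap.domCoprod_apply]
  have hcard : ((fun i => v (σ (Sum.inl i))) ⁻¹' S).ncard +
      ((fun j => v (σ (Sum.inr j))) ⁻¹' S).ncard = (v ⁻¹' S).ncard := by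
    rw [← Set.ncard_preimage_of_injective_subset_range (s := v ⁻¹' S) σ.injective (by simp)]
    exact ncard_preimage_inl_add_ncard_preimage_inr (σ ⁻¹' (v ⁻¹' S))
  obtain hp | hq : p < ((fun i => v (σ (Sum.inl i))) ⁻¹' S).ncard ∨
      q < ((fun j => v (σ (Sum.inr j))) ⁻¹' S).ncard := by omega
  · simp [hf _ hp]
  · simp [hg _ hq]

lemma DegreeLE.eq_zero {R M N ι : Type*} [CommRing R] [Nontrivial R] [AddCommGroup M] [Module R M]
    [AddCommMonoid N] [Module R N] [Finite ι] {S : Submodule R M} [Module.Free R S]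
    [Module.Free R (M ⧸ S)] [Module.Finite R (M ⧸ S)] {p : ℕ} {f : M [⋀^ι]→ₗ[R] N}
    (hf : DegreeLE S p f) (hp : p + Module.finrank R (M ⧸ S) < Nat.card ι) : f = 0 := by
  let e := Module.Basis.sumQuot (Module.Free.chooseBasis R S) (Module.finBasis R (M ⧸ S))
  refine e.ext_alternating fun v hv => hf _ ?_
  have hinr (i : ι) (hi : e (v i) ∉ S) : v i ∈ Set.range Sum.inr := by
    rcases hvi : v i with j | j
    · exact absurd (by simp [hvi, e]) hi
    · exact ⟨j, rfl⟩
  have houtside : ((fun i => e (v i)) ⁻¹' S)ᶜ.ncard ≤ Module.finrank R (M ⧸ S) := calc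
    _ ≤ (Set.range Sum.inr).ncard := Set.ncard_le_ncard_of_injOn v hinr hv.injOn
    _ = Module.finrank R (M ⧸ S) := by
      rw [Set.ncard_range_of_injective Sum.inr_injective, Nat.card_fin]
  have hsplit := Set.ncard_add_ncard_compl ((fun i => e (v i)) ⁻¹' S)
  omega

section LieAlgebra

variable {L : Type*} [LieRing L] [LieAlgebra ℝ L] {S : Submodule ℝ L}

lemma DegreeLE.wedge {a b p q : ℕ} {f : L [⋀^Fin a]→ₗ[ℝ] ℝ} {g : L [⋀^Fin b]→ₗ[ℝ] ℝ}
    (hf : DegreeLE S p f) (hg : DegreeLE S q g) : DegreeLE S (p + q) (wedge f g) :=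
  ((hf.domCoprod hg).compAlternatingMap _).domDomCongr _

lemma DegreeLE.pow2 {p : ℕ} {ω : L [⋀^Fin 2]→ₗ[ℝ] ℝ} (hω : DegreeLE S p ω) (n : ℕ) :
    DegreeLE S (n * p) (pow2 ω n) := by
  induction n with
  | zero => exact degreeLE_of_card_le _ (by simp)
  | succ n ih => exact Nat.succ_mul n p ▸ ih.wedge hω

lemma degreeLE_one_dee {η : Module.Dual ℝ L} (hη : ∀ x ∈ S, ∀ y ∈ S, η ⁅x, y⁆ = 0) :
    DegreeLE S 1 (dee η) := by
  intro v hv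
  have huniv : v ⁻¹' S = Set.univ := by
    by_contra hne
    have hlt := Set.ncard_lt_card hne
    rw [Nat.card_fin] at hlt
    omega
  have hmem (i : Fin 2) : v i ∈ S := Set.eq_univ_iff_forall.1 huniv i
  change -η ⁅v 0, v 1⁆ = 0
  rw [hη _ (hmem 0) _ (hmem 1), neg_zero]

lemma IsExactSymplectic.finrank_le [FiniteDimensional ℝ L] {n : ℕ} {α : Module.Dual ℝ L}
    (hα : IsExactSymplectic n α) (hS : ∀ x ∈ S, ∀ y ∈ S, α ⁅x, y⁆ = 0) :
    Module.finrank ℝ S ≤ n := by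
  obtain ⟨hdim, hne⟩ := hα
  by_contra! hlt
  have hcodim := S.finrank_quotient_add_finrank
  exact hne (((degreeLE_one_dee hS).pow2 n).eq_zero (by rw [Nat.card_fin]; omega))

lemma IsContact.finrank_le {n : ℕ} {η : Module.Dual ℝ L}
    (hη : IsContact n η) (hS : ∀ x ∈ S, ∀ y ∈ S, η ⁅x, y⁆ = 0) :
    Module.finrank ℝ S ≤ n + 1 := by
  obtain ⟨hdim, hne⟩ := hη
  have : FiniteDimensional ℝ L := Module.finite_of_finrank_pos (by omega)
  by_contra! hlt
  have hcodim := S.finrank_quotient_add_finrank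
  have hone : DegreeLE S 1 (oneForm η) := degreeLE_of_card_le _ (by simp)
  exact hne ((((degreeLE_one_dee hS).pow2 n).wedge hone).eq_zero (by rw [Nat.card_fin]; omega))

end LieAlgebra

theorem codim_one_abelian_no_contact_general {G : Type*} [LieRing G] [LieAlgebra ℝ G] (c : ℕ)
    (hdim : 2 * c + 2 ≤ Module.finrank ℝ G)
    (A : LieSubalgebra ℝ G) (hab : ∀ x ∈ A, ∀ y ∈ A, ⁅x, y⁆ = (0 : G))
    (hcodim : Module.finrank ℝ G = Module.finrank ℝ A + c) :
    (∀ (n : ℕ) (η : Module.Dual ℝ G), ¬ IsContact n η) ∧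
      (∀ (n : ℕ) (α : Module.Dual ℝ G), ¬ IsExactSymplectic n α) := by
  have : FiniteDimensional ℝ G := Module.finite_of_finrank_pos (by omega)
  have hisotropic (η : Module.Dual ℝ G) :
      ∀ x ∈ A.toSubmodule, ∀ y ∈ A.toSubmodule, η ⁅x, y⁆ = 0 :=
    fun x hx y hy => by rw [hab x hx y hy, map_zero]
  refine ⟨fun n η hη => ?_, fun n α hα => ?_⟩
  · have hle : Module.finrank ℝ A ≤ n + 1 := hη.finrank_le (hisotropic η)
    have hodd := hη.1
    omega
  · have hle : Module.finrank ℝ A ≤ n := hα.finrank_le (hisotropic α)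
    have heven := hα.1
    omega

/-- **Proposition 3.8 (2).** A Lie algebra of dimension at least 4 containing
a codimension-1 abelian subalgebra admits no contact form and no exact symplectic form. -/
theorem codim_one_abelian_no_contact
    {G : Type*} [LieRing G] [LieAlgebra ℝ G]
    (hdim : 4 ≤ Module.finrank ℝ G)
    (A : LieSubalgebra ℝ G) (hab : ∀ x ∈ A, ∀ y ∈ A, ⁅x, y⁆ = (0 : G))
    (hcodim : Module.finrank ℝ G = Module.finrank ℝ ↥A + 1) :
    (∀ (n : ℕ) (η : Module.Dual ℝ G), ¬ IsContact n η) ∧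
      (∀ (n : ℕ) (α : Module.Dual ℝ G), ¬ IsExactSymplectic n α) :=
  codim_one_abelian_no_contact_general 1 hdim A hab hcodim

end ContactLie
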